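/- arXiv:math/9302203 — 2 statements merged into one kernel-verified Lean document; each statement's English description precedes it below -/
import Mathlib

section
/- Let U be a nonprincipal p-point ultrafilter on ℕ. Then the game G_U is undetermined: neither player I nor player II has a winning strategy. That is, (1) there is no strategy σ for player I (a function from finite sequences of finite subsets of ℕ to subsets of ℕ such that, against every play of player II, the sets produced by σ are pairwise disjoint, have union ℕ, and each lies outside U) with the property that for every sequence ⟨F_n⟩ of finite sets with F_n ⊆ σ(⟨F_0,…,F_{n-1}⟩) for all n, the union ⋃_n F_n does not belong to U; and (2) there is no strategy μ for player II (a function assigning to every finite nonempty sequence ⟨I_0,…,I_n⟩ of subsets of ℕ a finite set μ(I_0,…,I_n) ⊆ I_n) with the property that for every sequence ⟨I_n⟩ of pairwise disjoint subsets of ℕ, each not in U, whose union is ℕ, the union ⋃_n μ(I_0,…,I_n) belongs to U. -/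
/-- `U` is nonprincipal: it contains no finite set. -/
def Nonprincipal (U : Ultrafilter ℕ) : Prop :=
  ∀ A : Set ℕ, A.Finite → A ∉ U

/-- `U` is a p-point: for every sequence of elements of `U` there is an `X ∈ U`
almost contained in each of them. -/
def IsPPoint (U : Ultrafilter ℕ) : Prop :=
  ∀ A : ℕ → Set ℕ, (∀ n, A n ∈ U) → ∃ X ∈ U, ∀ n, (X \ A n).Finite

/-- A play `F` of player II is consistent with player I's strategy `σ`
if at each stage `n` the finite set `F n` is contained in the set
`σ ⟨F 0, …, F (n-1)⟩` just played by player I. -/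
def ConsistentPlay (σ : List (Finset ℕ) → Set ℕ) (F : ℕ → Finset ℕ) : Prop :=
  ∀ n, ↑(F n) ⊆ σ ((List.range n).map F)

/-- `σ` is a legal strategy for player I: against every play of player II the
sets it produces are pairwise disjoint, lie outside `U`, and cover `ℕ`. -/
def LegalStrategyI (U : Ultrafilter ℕ) (σ : List (Finset ℕ) → Set ℕ) : Prop :=
  ∀ F : ℕ → Finset ℕ, ConsistentPlay σ F →
    (∀ m n, m ≠ n → Disjoint (σ ((List.range m).map F)) (σ ((List.range n).map F))) ∧
    (∀ n, σ ((List.range n).map F) ∉ U) ∧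
    (⋃ n, σ ((List.range n).map F)) = Set.univ

/-- `σ` is a winning strategy for player I: against every consistent play
`F` of player II, the union of player II's moves is not in `U`. -/
def WinningStrategyI (U : Ultrafilter ℕ) (σ : List (Finset ℕ) → Set ℕ) : Prop :=
  LegalStrategyI U σ ∧
    ∀ F : ℕ → Finset ℕ, ConsistentPlay σ F → (⋃ n, ↑(F n) : Set ℕ) ∉ U

/-- `μ` is a legal strategy for player II: to each nonempty finite sequence
`⟨I_0,…,I_n⟩` of moves of player I it assigns a finite subset of the last
move `I_n`. -/
def LegalStrategyII (μ : List (Set ℕ) → Finset ℕ) : Prop :=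
  ∀ (l : List (Set ℕ)) (I : Set ℕ), ↑(μ (l ++ [I])) ⊆ I

/-- `μ` is a winning strategy for player II: for every partition of `ℕ` into
pairwise disjoint sets outside `U` played by player I, the union of player
II's responses via `μ` belongs to `U`. -/
def WinningStrategyII (U : Ultrafilter ℕ) (μ : List (Set ℕ) → Finset ℕ) : Prop :=
  LegalStrategyII μ ∧
    ∀ I : ℕ → Set ℕ,
      (∀ m n, m ≠ n → Disjoint (I m) (I n)) →
      (∀ n, I n ∉ U) →
      (⋃ n, I n) = Set.univ →
      (⋃ n, ↑(μ ((List.range (n + 1)).map I)) : Set ℕ) ∈ U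

def mv (l : List (Set ℕ)) (B : Set ℕ) : Set ℕ :=
  (B ∪ Set.Iic l.length) \ {x | ∃ S ∈ l, x ∈ S}

theorem aux_list {α : Type*} (g : List α → α) :
    ∃ F : ℕ → α, ∀ n, F n = g ((List.range n).map F) := by
  let L : ℕ → List α := fun n => Nat.rec [] (fun _ l => l ++ [g l]) n
  refine ⟨fun n => g (L n), fun n => ?_⟩
  have h : ∀ n, L n = (List.range n).map (fun n => g (L n)) := by
    intro n
    induction n with
    | zero => rfl
    | succ k ih =>
      rw [List.range_succ, List.map_append, ← ih]
      rfl
  show g (L n) = _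
  rw [← h n]

theorem part_one (U : Ultrafilter ℕ) (hPP : IsPPoint U) :
    ¬ ∃ σ : List (Finset ℕ) → Set ℕ, WinningStrategyI U σ := by
  classical
  rintro ⟨σ, hleg, hwin⟩
  obtain ⟨e, he⟩ := exists_surjective_nat (List (Finset ℕ))
  obtain ⟨X, hX, hfin⟩ := hPP (fun n => if σ (e n) ∈ U then Set.univ else (σ (e n))ᶜ) (by
    intro n
    split_ifs with h
    · exact Filter.univ_mem
    · exact Ultrafilter.compl_mem_iff_notMem.2 h)
  have hfin' : ∀ l, σ l ∉ U → (X ∩ σ l).Finite := by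
    intro l hl
    obtain ⟨n, rfl⟩ := he l
    have := hfin n
    rw [if_neg hl] at this
    simpa [Set.sdiff_eq] using this
  obtain ⟨F, hF⟩ := aux_list (fun l => if h : (X ∩ σ l).Finite then h.toFinset else ∅)
  have hc : ConsistentPlay σ F := by
    intro n
    rw [hF n]
    split_ifs with h
    · simp
    · simp
  obtain ⟨_, h2, h3⟩ := hleg F hc
  refine hwin F hc (Filter.mem_of_superset hX ?_)
  intro x hx
  have : x ∈ ⋃ n, σ ((List.range n).map F) := by rw [h3]; trivial
  obtain ⟨n, hn⟩ := Set.mem_iUnion.1 this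
  refine Set.mem_iUnion.2 ⟨n, ?_⟩
  rw [hF n, dif_pos (hfin' _ (h2 n))]
  simp [hx, hn]

theorem key (U : Ultrafilter ℕ) (hNP : Nonprincipal U) (f : Set ℕ → ℕ) (a : ℕ) :
    ∃ m, a < m ∧ ∀ N, ∃ B, B ∉ U ∧ Set.Ico m N ⊆ B ∧ f B ≤ m := by
  by_contra! hcon
  have h1 : ∀ m, ∃ N, m < N ∧ (a < m → ∀ B, B ∉ U → Set.Ico m N ⊆ B → m < f B) := by
    intro m
    by_cases hm : a < m
    · obtain ⟨N, hN⟩ := hcon m hm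
      refine ⟨max N (m+1), by simp, fun _ B hB hs => hN B hB (subset_trans ?_ hs)⟩
      exact Set.Ico_subset_Ico_right (le_max_left _ _)
    · exact ⟨m+1, by omega, fun h => absurd h hm⟩
  choose N hN hN2 using h1
  let b : ℕ → ℕ := fun n => N^[n] (a+1)
  have hb : ∀ n, b (n+1) = N (b n) := fun n => Function.iterate_succ_apply' N n (a+1)
  have hmono : StrictMono b := strictMono_nat_of_lt_succ (fun n => by rw [hb]; exact hN _)
  have hge : ∀ n, a < b n := fun n =>
    lt_of_lt_of_le (Nat.lt_succ_self a) (hmono.monotone (Nat.zero_le n))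
  let E : ℕ → Set ℕ := fun r => ⋃ i, Set.Ico (b (2*i+r)) (b (2*i+r+1))
  have hE : ∀ r, E r ∈ U := by
    intro r
    by_contra hr
    have h := hN2 (b (2 * (f (E r)) + r)) (hge _) (E r) hr (by
      rw [← hb]
      exact Set.subset_iUnion (fun i => Set.Ico (b (2*i+r)) (b (2*i+r+1))) (f (E r)))
    have := hmono.id_le (2 * (f (E r)) + r)
    simp only [id] at this
    omega
  have hemp : E 0 ∩ E 1 = ∅ := by
    ext x
    simp only [E, Set.mem_inter_iff, Set.mem_iUnion, Set.mem_Ico, Set.mem_empty_iff_false, iff_false]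
    rintro ⟨⟨i, hi1, hi2⟩, ⟨j, hj1, hj2⟩⟩
    have h1 : 2*i+0 < 2*j+1+1 := hmono.lt_iff_lt.1 (lt_of_le_of_lt hi1 hj2)
    have h2 : 2*j+1 < 2*i+0+1 := hmono.lt_iff_lt.1 (lt_of_le_of_lt hj1 hi2)
    omega
  have := Filter.inter_mem (hE 0) (hE 1)
  rw [hemp] at this
  exact hNP ∅ Set.finite_empty this

theorem single (U : Ultrafilter ℕ) (hNP : Nonprincipal U) (μ : List (Set ℕ) → Finset ℕ)
    (hμ : WinningStrategyII U μ) (L : ℕ → List (Set ℕ)) (B : ℕ → Set ℕ) (m N : ℕ → ℕ)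
    (hL0 : L 0 = []) (hL : ∀ n, L (n+1) = L n ++ [mv (L n) (B n)])
    (hB : ∀ n, B n ∉ U) (hm : Monotone m) (hmN : ∀ n, Set.Ico (m n) (N n) ⊆ B n)
    (hb : ∀ n, ∀ x ∈ μ (L n ++ [mv (L n) (B n)]), x < m n) :
    ∃ Y ∈ U, ∀ n x, m n ≤ x → x < N n → x ∉ Y := by
  obtain ⟨hleg, hwin⟩ := hμ
  let I : ℕ → Set ℕ := fun n => mv (L n) (B n)
  have hLI : ∀ n, L n = (List.range n).map I := by
    intro n
    induction n with
    | zero => simpa using hL0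
    | succ k ih => rw [hL, List.range_succ, List.map_append, ← ih]; rfl
  have hlen : ∀ n, (L n).length = n := fun n => by rw [hLI]; simp
  have hI : ∀ n x, x ∈ I n ↔ (x ∈ B n ∨ x ≤ n) ∧ ∀ j < n, x ∉ I j := by
    intro n x
    have : x ∈ I n ↔ (x ∈ B n ∨ x ≤ (L n).length) ∧ ¬ ∃ S ∈ L n, x ∈ S := Iff.rfl
    rw [this, hlen, hLI n]
    simp
  have hdisj : ∀ i n x, x ∈ I i → x ∈ I n → i = n := by
    intro i n x hi hn
    rcases lt_trichotomy i n with h | h | h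
    · exact absurd hi (((hI n x).1 hn).2 i h)
    · exact h
    · exact absurd hn (((hI i x).1 hi).2 n h)
  have hcov : ∀ n x, (x ∈ B n ∨ x ≤ n) → ∃ j ≤ n, x ∈ I j := by
    intro n x hx
    by_cases h : ∀ j < n, x ∉ I j
    · exact ⟨n, le_rfl, (hI n x).2 ⟨hx, h⟩⟩
    · push Not at h
      obtain ⟨j, hj, hxj⟩ := h
      exact ⟨j, hj.le, hxj⟩
  have hLs : ∀ n, (List.range (n+1)).map I = L n ++ [I n] := by
    intro n; rw [← hLI, hL]
  refine ⟨_, hwin I ?_ ?_ ?_, ?_⟩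
  · intro i n hne
    rw [Set.disjoint_left]
    intro x hi hn
    exact hne (hdisj i n x hi hn)
  · intro n hn
    have h1 : B n ∪ Set.Iic n ∈ U := Filter.mem_of_superset hn (fun x hx => ((hI n x).1 hx).1)
    rcases Ultrafilter.union_mem_iff.1 h1 with h | h
    · exact hB n h
    · exact hNP _ (Set.finite_Iic n) h
  · ext x
    simp only [Set.mem_iUnion, Set.mem_univ, iff_true]
    obtain ⟨j, _, hj⟩ := hcov x x (Or.inr le_rfl)
    exact ⟨j, hj⟩
  · intro n x h1 h2 hx
    obtain ⟨k, hk⟩ := Set.mem_iUnion.1 hx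
    rw [hLs] at hk
    have hkI : x ∈ I k := hleg _ _ hk
    obtain ⟨j, hjn, hj⟩ := hcov n x (Or.inl (hmN n ⟨h1, h2⟩))
    have hkj := hdisj k j x hkI hj
    subst hkj
    have := hb k x hk
    have := hm hjn
    omega

theorem part_two (U : Ultrafilter ℕ) (hNP : Nonprincipal U) :
    ¬ ∃ μ : List (Set ℕ) → Finset ℕ, WinningStrategyII U μ := by
  rintro ⟨μ, hμ⟩
  have hk : ∀ (l : List (Set ℕ)) (a : ℕ), ∃ m, a < m ∧ ∀ N, ∃ B, B ∉ U ∧ Set.Ico m N ⊆ B ∧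
      ∀ x ∈ μ (l ++ [mv l B]), x < m := by
    intro l a
    obtain ⟨m, ham, h⟩ := key U hNP (fun B => (μ (l ++ [mv l B])).sup id + 1) a
    refine ⟨m, ham, fun N => ?_⟩
    obtain ⟨B, h1, h2, h3⟩ := h N
    refine ⟨B, h1, h2, fun x hx => ?_⟩
    have := Finset.le_sup (f := id) hx
    simp only [id] at this h3
    omega
  choose M hM B hB1 hB2 hB3 using hk
  let l1 : List (Set ℕ) × List (Set ℕ) × ℕ → List (Set ℕ) := fun s =>
    s.1 ++ [mv s.1 (B s.1 s.2.2 (M s.2.1 (M s.1 s.2.2)))]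
  let p : List (Set ℕ) × List (Set ℕ) × ℕ → ℕ := fun s => M s.1 s.2.2
  let q : List (Set ℕ) × List (Set ℕ) × ℕ → ℕ := fun s => M s.2.1 (p s)
  let step : List (Set ℕ) × List (Set ℕ) × ℕ → List (Set ℕ) × List (Set ℕ) × ℕ := fun s =>
    (l1 s, s.2.1 ++ [mv s.2.1 (B s.2.1 (p s) (M (l1 s) (q s)))], q s)
  let S : ℕ → List (Set ℕ) × List (Set ℕ) × ℕ := fun n => step^[n] ([], [], 0)
  have hS : ∀ n, S (n+1) = step (S n) := fun n => Function.iterate_succ_apply' step n _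
  have hpq : ∀ n, p (S n) < q (S n) := fun n => hM _ _
  have hpn : ∀ n, p (S (n+1)) = M (l1 (S n)) (q (S n)) := fun n => by rw [hS]
  have hqp : ∀ n, q (S n) < p (S (n+1)) := fun n => by rw [hpn]; exact hM _ _
  have hp : StrictMono (fun n => p (S n)) :=
    strictMono_nat_of_lt_succ (fun n => (hpq n).trans (hqp n))
  have hq : StrictMono (fun n => q (S n)) :=
    strictMono_nat_of_lt_succ (fun n => (hqp n).trans (hpq (n+1)))
  obtain ⟨Y, hY, hY2⟩ := single U hNP μ hμ (fun n => (S n).1)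
    (fun n => B (S n).1 (S n).2.2 (q (S n))) (fun n => p (S n)) (fun n => q (S n)) rfl
    (fun n => by simp only [hS]; rfl) (fun n => hB1 _ _ _) hp.monotone (fun n => hB2 _ _ _)
    (fun n => hB3 _ _ _)
  obtain ⟨Z, hZ, hZ2⟩ := single U hNP μ hμ (fun n => (S n).2.1)
    (fun n => B (S n).2.1 (p (S n)) (p (S (n+1)))) (fun n => q (S n)) (fun n => p (S (n+1))) rfl
    (fun n => by simp only [hpn]; simp only [hS]; rfl) (fun n => hB1 _ _ _) hq.monotone
    (fun n => hB2 _ _ _) (fun n => hB3 _ _ _)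
  refine hNP (Y ∩ Z) ((Set.finite_Iio (p (S 0))).subset ?_) (Filter.inter_mem hY hZ)
  rintro x ⟨hxY, hxZ⟩
  have hall : ∀ k, x < p (S k) → x < p (S 0) := by
    intro k
    induction k with
    | zero => exact id
    | succ k ih =>
      intro hk
      apply ih
      by_contra h1
      by_cases h2 : x < q (S k)
      · exact hY2 k x (by simpa using h1) h2 hxY
      · exact hZ2 k x (by simpa using h2) hk hxZ
  have := hp.id_le (x+1)
  exact hall (x+1) (by simp only [id] at this; omega)

theorem game_GU_undetermined
    (U : Ultrafilter ℕ) (hNP : Nonprincipal U) (hPP : IsPPoint U) :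
    (¬ ∃ σ : List (Finset ℕ) → Set ℕ, WinningStrategyI U σ) ∧
    (¬ ∃ μ : List (Set ℕ) → Finset ℕ, WinningStrategyII U μ) :=
  ⟨part_one U hPP, part_two U hNP⟩
end

section
/- Let U be a nonprincipal p-point ultrafilter on ℕ. Then player II does not have a winning strategy in the game G_U. That is, for every function μ assigning to each finite nonempty sequence ⟨I_0,…,I_n⟩ of subsets of ℕ a finite set μ(I_0,…,I_n) ⊆ I_n, there exists a sequence ⟨I_n : n ∈ ℕ⟩ of pairwise disjoint subsets of ℕ, each not belonging to U, with ⋃_n I_n = ℕ, such that ⋃_n μ(I_0,…,I_n) ∉ U. -/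
theorem ppg_color (U : Ultrafilter ℕ) (c : Set ℕ → ℕ) :
    ∃ k n : ℕ, ∀ m, ∃ A : Set ℕ, A ∉ U ∧ c A = k ∧ ∀ x, n ≤ x → x < m → x ∈ A := by
  by_contra! H
  choose f hf using H
  -- a bound for all colors up to i
  let g : ℕ → ℕ → ℕ := fun i n => n + 1 + ∑ k ∈ Finset.range (i + 1), f k n
  obtain ⟨a, ha⟩ : ∃ a : ℕ → ℕ, ∀ i, a (i + 1) = g i (a i) :=
    ⟨fun i => Nat.rec 0 (fun i r => g i r) i, fun i => rfl⟩
  have hmono : StrictMono a := by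
    apply strictMono_nat_of_lt_succ
    intro i
    rw [ha]
    simp only [g]
    omega
  have hbig : ∀ i k, k ≤ i → f k (a i) ≤ a (i + 1) := by
    intro i k hk
    rw [ha]
    have : f k (a i) ≤ ∑ k ∈ Finset.range (i + 1), f k (a i) :=
      Finset.single_le_sum (f := fun k => f k (a i)) (fun _ _ => Nat.zero_le _)
      (Finset.mem_range.2 (Nat.lt_succ_of_le hk))
    simp only [g]
    omega
  have key : ∀ B : Set ℕ, B ∉ U →
      (∀ k, ∃ i, k ≤ i ∧ ∀ x, a i ≤ x → x < a (i + 1) → x ∈ B) → False := by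
    intro B hB h
    obtain ⟨i, hi, hx⟩ := h (c B)
    obtain ⟨x, h1, h2, h3⟩ := hf (c B) (a i) B hB rfl
    exact h3 (hx x h1 (lt_of_lt_of_le h2 (hbig i _ hi)))
  let E : Set ℕ := {x | ∃ i, a (2 * i) ≤ x ∧ x < a (2 * i + 1)}
  by_cases hE : E ∈ U
  · apply key Eᶜ (fun h => by
      have := Ultrafilter.compl_mem_iff_notMem.1 h
      exact this hE)
    intro k
    refine ⟨2 * k + 1, by omega, ?_⟩
    rintro x h1 h2 ⟨i, h3, h4⟩
    have h7 : a (2 * k + 1) < a (2 * i + 1) := lt_of_le_of_lt h1 h4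
    have h8 : a (2 * i) < a (2 * k + 1 + 1) := lt_of_le_of_lt h3 h2
    have h5 := hmono.lt_iff_lt.1 h7
    have h6 := hmono.lt_iff_lt.1 h8
    omega
  · apply key E hE
    intro k
    exact ⟨2 * k, by omega, fun x h1 h2 => ⟨k, h1, h2⟩⟩

theorem ppg_step (U : Ultrafilter ℕ) (hNP : Nonprincipal U)
    (μ : List (Set ℕ) → Finset ℕ) (p : List (Set ℕ)) (N : ℕ) :
    ∃ n, N ≤ n ∧ ∀ m, ∃ J : Set ℕ, J ∉ U ∧ (∀ A ∈ p, Disjoint A J) ∧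
      (∀ x, (x < N ∨ (n ≤ x ∧ x < m)) → x ∈ J ∨ ∃ A ∈ p, x ∈ A) ∧
      (∀ x ∈ μ (p ++ [J]), x < n) := by
  let T : Set ℕ → Set ℕ := fun A => (A ∪ Set.Iio N) \ {x | ∃ B ∈ p, x ∈ B}
  obtain ⟨k, n, h⟩ := ppg_color U (fun A => (μ (p ++ [T A])).sup id + 1)
  refine ⟨max N (max k n), le_max_left _ _, fun m => ?_⟩
  obtain ⟨A, hA, hk, hx⟩ := h m
  refine ⟨T A, ?_, ?_, ?_, ?_⟩
  · intro hT
    have h1 : A ∪ Set.Iio N ∈ U := Filter.mem_of_superset hT Set.sdiff_subset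
    rcases Ultrafilter.union_mem_iff.1 h1 with h2 | h2
    · exact hA h2
    · exact hNP _ (Set.finite_Iio N) h2
  · intro B hB
    rw [Set.disjoint_left]
    intro x hxB hxT
    exact hxT.2 ⟨B, hB, hxB⟩
  · intro x hh
    by_cases hp : ∃ B ∈ p, x ∈ B
    · exact Or.inr hp
    · refine Or.inl ⟨?_, hp⟩
      rcases hh with hh | ⟨h1, h2⟩
      · exact Or.inr hh
      · exact Or.inl (hx x (by omega) h2)
  · intro x hxm
    have := Finset.le_sup (f := id) hxm
    simp only [id] at this
    have h3 : x < k := by rw [← hk]; exact Nat.lt_succ_of_le this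
    omega

theorem playerII_no_winning_strategy
    (U : Ultrafilter ℕ) (hNP : Nonprincipal U) (hPP : IsPPoint U)
    (μ : List (Set ℕ) → Finset ℕ) (hμ : LegalStrategyII μ) :
    ∃ I : ℕ → Set ℕ,
      (∀ m n, m ≠ n → Disjoint (I m) (I n)) ∧
      (∀ n, I n ∉ U) ∧
      (⋃ n, I n) = Set.univ ∧
      (⋃ n, ↑(μ ((List.range (n + 1)).map I)) : Set ℕ) ∉ U := by
  choose ν hν Jf hJU hJd hJc hJm using ppg_step U hNP μ
  let S : ℕ → List (Set ℕ) × List (Set ℕ) × ℕ := fun k => Nat.rec ([], [], 0)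
    (fun _ s => (s.2.1, s.1 ++ [Jf s.1 s.2.2 (ν s.2.1 (ν s.1 s.2.2 + 1))], ν s.1 s.2.2 + 1)) k
  obtain ⟨p, hp⟩ : ∃ p : ℕ → List (Set ℕ), p = fun k => (S k).1 := ⟨_, rfl⟩
  obtain ⟨N, hN⟩ : ∃ N : ℕ → ℕ, N = fun k => (S k).2.2 := ⟨_, rfl⟩
  obtain ⟨a, haa⟩ : ∃ a : ℕ → ℕ, a = fun k => ν (p k) (N k) := ⟨_, rfl⟩
  obtain ⟨J, hJ⟩ : ∃ J : ℕ → Set ℕ, J = fun k => Jf (p k) (N k) (a (k + 1)) := ⟨_, rfl⟩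
  have hp0 : p 0 = [] := by rw [hp]; rfl
  have hp1 : p 1 = [] := by rw [hp]; rfl
  have hp2 : ∀ k, p (k + 2) = p k ++ [J k] := by
    intro k; subst hJ haa hp hN; rfl
  have hN1 : ∀ k, N (k + 1) = a k + 1 := by
    intro k; subst hJ haa hp hN; rfl
  have hNa : ∀ k, N k ≤ a k := by intro k; rw [haa]; exact hν _ _
  have hJU' : ∀ k, J k ∉ U := by intro k; rw [hJ]; exact hJU _ _ _
  have hJd' : ∀ k, ∀ A ∈ p k, Disjoint A (J k) := by intro k; rw [hJ]; exact hJd _ _ _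
  have hJc' : ∀ k x, (x < N k ∨ (a k ≤ x ∧ x < a (k + 1))) → x ∈ J k ∨ ∃ A ∈ p k, x ∈ A := by
    intro k x h; rw [hJ]; apply hJc; rw [haa] at h ⊢; exact h
  have hJm' : ∀ k, ∀ x ∈ μ (p k ++ [J k]), x < a k := by
    intro k; rw [hJ, haa]; exact hJm _ _ _
  clear hJ haa hp hN
  have hmono : StrictMono a := by
    apply strictMono_nat_of_lt_succ
    intro i
    have := hNa (i + 1); have := hN1 i; omega
  have hNk : ∀ k, k ≤ N k := by
    intro k
    cases k with
    | zero => omega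
    | succ k => have := hmono.le_apply (x := k); have := hN1 k; omega
  have hpe : ∀ e, e < 2 → ∀ i, p (e + 2 * i) = (List.range i).map (fun i => J (e + 2 * i)) := by
    intro e he i
    induction i with
    | zero =>
      have : e = 0 ∨ e = 1 := by omega
      rcases this with rfl | rfl
      · simpa using hp0
      · simpa using hp1
    | succ i ih =>
      rw [List.range_succ, List.map_append, ← ih]
      exact hp2 _
  have hdis : ∀ e, e < 2 → ∀ i j, i < j → Disjoint (J (e + 2 * i)) (J (e + 2 * j)) := by
    intro e he i j hij
    apply hJd'
    rw [hpe e he]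
    exact List.mem_map.2 ⟨i, List.mem_range.2 hij, rfl⟩
  have hdis' : ∀ e, e < 2 → ∀ i j, i ≠ j → Disjoint (J (e + 2 * i)) (J (e + 2 * j)) := by
    intro e he i j hij
    rcases lt_or_gt_of_ne hij with h | h
    · exact hdis e he i j h
    · exact (hdis e he j i h).symm
  have hcov : ∀ e, e < 2 → ∀ i x,
      (x < N (e + 2 * i) ∨ (a (e + 2 * i) ≤ x ∧ x < a (e + 2 * i + 1))) →
      ∃ j, j ≤ i ∧ x ∈ J (e + 2 * j) := by
    intro e he i x h
    rcases hJc' _ x h with h | ⟨A, hA, hxA⟩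
    · exact ⟨i, le_rfl, h⟩
    · rw [hpe e he] at hA
      obtain ⟨j, hj, rfl⟩ := List.mem_map.1 hA
      exact ⟨j, (List.mem_range.1 hj).le, hxA⟩
  have hlist : ∀ e, e < 2 → ∀ i, (List.range (i + 1)).map (fun i => J (e + 2 * i))
      = p (e + 2 * i) ++ [J (e + 2 * i)] := by
    intro e he i
    rw [← hpe e he]
    exact hp2 _
  by_contra! H
  have hwin : ∀ e, e < 2 →
      (⋃ n, ↑(μ ((List.range (n + 1)).map (fun i => J (e + 2 * i)))) : Set ℕ) ∈ U := by
    intro e he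
    apply H (fun i => J (e + 2 * i)) (hdis' e he) (fun _ => hJU' _)
    rw [Set.eq_univ_iff_forall]
    intro x
    obtain ⟨j, -, hj⟩ := hcov e he (x + 1) x (Or.inl (by have := hNk (e + 2 * (x + 1)); omega))
    exact Set.mem_iUnion.2 ⟨j, hj⟩
  have hesc : ∀ e, e < 2 → ∀ i x, a (e + 2 * i) ≤ x → x < a (e + 2 * i + 1) →
      x ∉ (⋃ n, ↑(μ ((List.range (n + 1)).map (fun i => J (e + 2 * i)))) : Set ℕ) := by
    intro e he i x h1 h2 hx
    obtain ⟨j, hj⟩ := Set.mem_iUnion.1 hx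
    rw [hlist e he] at hj
    have h3 : x ∈ J (e + 2 * j) := hμ _ _ hj
    have h4 := hJm' _ x hj
    have h5 := hmono.lt_iff_lt.1 (lt_of_le_of_lt h1 h4)
    obtain ⟨l, hl, hxl⟩ := hcov e he i x (Or.inr ⟨h1, h2⟩)
    exact Set.disjoint_left.1 (hdis e he l j (by omega)) hxl h3
  refine hNP _ ?_ (Filter.inter_mem (hwin 0 (by omega)) (hwin 1 (by omega)))
  apply (Set.finite_Iio (a 0)).subset
  rintro x ⟨hx0, hx1⟩
  by_contra hx
  have hx : a 0 ≤ x := by simpa using hx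
  have hex : ∃ k, x < a (k + 1) := ⟨x, by have := hmono.le_apply (x := x + 1); omega⟩
  obtain ⟨k, hk1, hk2⟩ : ∃ k, a k ≤ x ∧ x < a (k + 1) := by
    classical
    refine ⟨Nat.find hex, ?_, Nat.find_spec hex⟩
    rcases h : Nat.find hex with _ | k
    · exact hx
    · have := Nat.find_min hex (m := k) (by omega)
      omega
  rcases Nat.even_or_odd' k with ⟨i, rfl | rfl⟩
  · exact hesc 0 (by omega) i x (by simpa using hk1) (by simpa using hk2) hx0
  · rw [add_comm (2 * i) 1] at hk1 hk2
    exact hesc 1 (by omega) i x hk1 hk2 hx1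
end
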